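/- arXiv:0805.4533 — 2 statements merged into one kernel-verified Lean document; each statement's English description precedes it below -/
import Mathlib

section
/- Let P ⊆ ℝ^d be a d-dimensional simplicial reflexive polytope and let v, w, w' ∈ 𝒱(P) be pairwise distinct vertices such that w ≠ −v, w' ≠ −v, v ≁ w and v ≁ w'. Then the linear span L of {v, w, w'} is a 2-dimensional subspace, and P ∩ L is a 2-dimensional polytope which is reflexive with respect to the rank-2 lattice ℤ^d ∩ L (i.e. the linear extension of any lattice isomorphism ℤ^d ∩ L → ℤ² maps P ∩ L onto a reflexive polygon) and has at least five vertices. -/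
noncomputable section

/-- The standard inner product on `ℝ^d`. -/
def dotp {d : ℕ} (x y : Fin d → ℝ) : ℝ := ∑ i, x i * y i

/-- `x` is a point of the lattice `ℤ^d`. -/
def IsLP {d : ℕ} (x : Fin d → ℝ) : Prop := ∀ i, ∃ n : ℤ, x i = (n : ℝ)

/-- A lattice polytope: convex hull of finitely many lattice points. -/
def IsLatticePolytope {d : ℕ} (P : Set (Fin d → ℝ)) : Prop :=
  ∃ V : Finset (Fin d → ℝ), (∀ v ∈ V, IsLP v) ∧ P = convexHull ℝ (V : Set (Fin d → ℝ))

/-- The dual polytope `P* = {x | ⟨x,y⟩ ≤ 1 ∀ y ∈ P}`. -/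
def dualPolytope {d : ℕ} (P : Set (Fin d → ℝ)) : Set (Fin d → ℝ) :=
  {x | ∀ y ∈ P, dotp x y ≤ 1}

/-- `P` is a reflexive polytope: a (`d`-dimensional) lattice polytope with `0` in its
interior whose dual is again a lattice polytope. -/
def IsReflexive {d : ℕ} (P : Set (Fin d → ℝ)) : Prop :=
  IsLatticePolytope P ∧ (0 : Fin d → ℝ) ∈ interior P ∧ IsLatticePolytope (dualPolytope P)

/-- `F` is a facet of `P` with (uniquely determined) outer normal `u`, normalized by
`⟨u, F⟩ = 1` (possible since `0` is in the interior of `P`). -/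
def IsFacetNormal {d : ℕ} (P F : Set (Fin d → ℝ)) (u : Fin d → ℝ) : Prop :=
  F.Nonempty ∧ (∀ y ∈ P, dotp u y ≤ 1) ∧ F = {y ∈ P | dotp u y = 1} ∧
    Module.finrank ℝ (vectorSpan ℝ F) = d - 1

/-- `F` is a facet of `P`. -/
def IsFacet {d : ℕ} (P F : Set (Fin d → ℝ)) : Prop := ∃ u, IsFacetNormal P F u

/-- `P` is simplicial: every facet has exactly `d` vertices. -/
def IsSimplicial {d : ℕ} (P : Set (Fin d → ℝ)) : Prop :=
  ∀ F, IsFacet P F → (Set.extremePoints ℝ F).ncard = d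

/-! ### Basic facts about the inner product -/

lemma dotp_add_right {d : ℕ} (u x y : Fin d → ℝ) : dotp u (x + y) = dotp u x + dotp u y := by
  simp [dotp, mul_add, Finset.sum_add_distrib]

lemma dotp_smul_right {d : ℕ} (u : Fin d → ℝ) (a : ℝ) (x : Fin d → ℝ) :
    dotp u (a • x) = a * dotp u x := by
  simp only [dotp, Pi.smul_apply, smul_eq_mul, Finset.mul_sum]
  exact Finset.sum_congr rfl fun i _ => by ring

lemma dotp_comm {d : ℕ} (u x : Fin d → ℝ) : dotp u x = dotp x u := by
  simp only [dotp]
  exact Finset.sum_congr rfl fun i _ => by ring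

lemma dotp_add_left {d : ℕ} (u u' x : Fin d → ℝ) : dotp (u + u') x = dotp u x + dotp u' x := by
  rw [dotp_comm, dotp_add_right, dotp_comm x u, dotp_comm x u']

lemma dotp_smul_left {d : ℕ} (a : ℝ) (u x : Fin d → ℝ) : dotp (a • u) x = a * dotp u x := by
  rw [dotp_comm, dotp_smul_right, dotp_comm]

/-- `dotp u` as a linear map. -/
def dotpL {d : ℕ} (u : Fin d → ℝ) : (Fin d → ℝ) →ₗ[ℝ] ℝ where
  toFun := dotp u
  map_add' := dotp_add_right u
  map_smul' := dotp_smul_right u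

lemma dotpL_apply {d : ℕ} (u x : Fin d → ℝ) : dotpL u x = dotp u x := rfl

lemma dotp_zero_right {d : ℕ} (u : Fin d → ℝ) : dotp u 0 = 0 := (dotpL u).map_zero
lemma dotp_zero_left {d : ℕ} (u : Fin d → ℝ) : dotp 0 u = 0 := by
  rw [dotp_comm]; exact dotp_zero_right u
lemma dotp_neg_right {d : ℕ} (u x : Fin d → ℝ) : dotp u (-x) = -dotp u x := (dotpL u).map_neg x
lemma dotp_sub_right {d : ℕ} (u x y : Fin d → ℝ) : dotp u (x - y) = dotp u x - dotp u y :=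
  (dotpL u).map_sub x y
lemma dotp_sub_left {d : ℕ} (u u' x : Fin d → ℝ) : dotp (u - u') x = dotp u x - dotp u' x := by
  rw [dotp_comm, dotp_sub_right, dotp_comm x u, dotp_comm x u']

lemma dotp_cont {d : ℕ} (x : Fin d → ℝ) : Continuous (fun u : Fin d → ℝ => dotp u x) := by
  unfold dotp; fun_prop

lemma exists_dotp {d : ℕ} (f : (Fin d → ℝ) →ₗ[ℝ] ℝ) : ∃ a : Fin d → ℝ, ∀ x, f x = dotp a x := by
  refine ⟨fun i => f (Pi.single i 1), fun x => ?_⟩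
  rw [LinearMap.pi_apply_eq_sum_univ f x]
  refine Finset.sum_congr rfl fun i _ => ?_
  rw [smul_eq_mul, mul_comm]
  congr 2
  ext j
  simp [Pi.single_apply, eq_comm]

lemma dotp_self_eq_zero {d : ℕ} {x : Fin d → ℝ} (h : dotp x x = 0) : x = 0 := by
  funext i
  have := (Finset.sum_eq_zero_iff_of_nonneg (fun i _ => mul_self_nonneg (x i))).1 h i
    (Finset.mem_univ i)
  simpa using this

lemma dotp_ext {d : ℕ} {u u' : Fin d → ℝ} (h : ∀ x, dotp u x = dotp u' x) : u = u' := by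
  have : dotp (u - u') (u - u') = 0 := by rw [dotp_sub_left, h, sub_self]
  exact sub_eq_zero.1 (dotp_self_eq_zero this)

lemma IsLP.add {d : ℕ} {x y : Fin d → ℝ} (hx : IsLP x) (hy : IsLP y) : IsLP (x + y) := by
  intro i
  obtain ⟨m, hm⟩ := hx i
  obtain ⟨n, hn⟩ := hy i
  exact ⟨m + n, by simp [hm, hn]⟩

lemma IsLP.nsmul {d : ℕ} {x : Fin d → ℝ} (hx : IsLP x) (t : ℕ) : IsLP ((t : ℝ) • x) := by
  intro i
  obtain ⟨m, hm⟩ := hx i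
  exact ⟨t * m, by simp [hm]⟩

lemma IsLP.dotp {d : ℕ} {x y : Fin d → ℝ} (hx : IsLP x) (hy : IsLP y) :
    ∃ n : ℤ, _root_.dotp x y = n := by
  choose a ha using hx
  choose b hb using hy
  exact ⟨∑ i, a i * b i, by simp [_root_.dotp, ha, hb]⟩

/-! ### Duality -/

lemma bipolar {d : ℕ} {K : Set (Fin d → ℝ)} (hc : Convex ℝ K) (hcl : IsClosed K)
    (h0 : (0 : Fin d → ℝ) ∈ K) {x : Fin d → ℝ} (hx : ∀ u ∈ dualPolytope K, dotp u x ≤ 1) :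
    x ∈ K := by
  by_contra hxK
  obtain ⟨f, s, hf, hs⟩ := geometric_hahn_banach_closed_point hc hcl hxK
  obtain ⟨a, ha⟩ := exists_dotp (f : (Fin d → ℝ) →ₗ[ℝ] ℝ)
  have ha' : ∀ x, f x = dotp a x := ha
  have hs0 : 0 < s := by simpa using hf 0 h0
  have h1 : (s⁻¹ • a) ∈ dualPolytope K := by
    intro y hy
    rw [dotp_smul_left, ← ha', inv_mul_le_iff₀ hs0]
    linarith [hf y hy]
  have := hx _ h1
  rw [dotp_smul_left, ← ha', inv_mul_le_iff₀ hs0] at this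
  linarith

lemma dual_convex {d : ℕ} (K : Set (Fin d → ℝ)) : Convex ℝ (dualPolytope K) := by
  intro x hx y hy a b ha hb hab z hz
  rw [dotp_add_left, dotp_smul_left, dotp_smul_left]
  have := hx z hz
  have := hy z hz
  nlinarith

lemma dual_convexHull {d : ℕ} (S : Set (Fin d → ℝ)) {u : Fin d → ℝ}
    (h : ∀ y ∈ S, dotp u y ≤ 1) : u ∈ dualPolytope (convexHull ℝ S) := by
  intro y hy
  have hc : Convex ℝ {y | dotp u y ≤ 1} := convex_halfSpace_le (dotpL u).isLinear 1
  exact convexHull_min (t := {y | dotp u y ≤ 1}) h hc hy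

/-! ### The setting -/

/-- Vertices of the dual polytope, i.e. facet normals. -/
def FN {d : ℕ} (P : Set (Fin d → ℝ)) : Set (Fin d → ℝ) := Set.extremePoints ℝ (dualPolytope P)

/-- Vertices on the facet with normal `u`. -/
def VX {d : ℕ} (P : Set (Fin d → ℝ)) (u : Fin d → ℝ) : Set (Fin d → ℝ) :=
  {x | x ∈ Set.extremePoints ℝ P ∧ dotp u x = 1}

lemma lp_extreme {d : ℕ} {P : Set (Fin d → ℝ)} (h : IsLatticePolytope P) {x : Fin d → ℝ}
    (hx : x ∈ Set.extremePoints ℝ P) : IsLP x := by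
  obtain ⟨V, hV, rfl⟩ := h
  exact hV x (extremePoints_convexHull_subset hx)

lemma lp_compact {d : ℕ} {P : Set (Fin d → ℝ)} (h : IsLatticePolytope P) : IsCompact P := by
  obtain ⟨V, hV, rfl⟩ := h
  exact V.finite_toSet.isCompact_convexHull (𝕜 := ℝ)

lemma lp_convex {d : ℕ} {P : Set (Fin d → ℝ)} (h : IsLatticePolytope P) : Convex ℝ P := by
  obtain ⟨V, hV, rfl⟩ := h
  exact convex_convexHull ℝ _

lemma lp_ext_finite {d : ℕ} {P : Set (Fin d → ℝ)} (h : IsLatticePolytope P) :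
    (Set.extremePoints ℝ P).Finite := by
  obtain ⟨V, hV, rfl⟩ := h
  exact V.finite_toSet.subset extremePoints_convexHull_subset

lemma lp_hull {d : ℕ} {P : Set (Fin d → ℝ)} (h : IsLatticePolytope P) :
    convexHull ℝ (Set.extremePoints ℝ P) = P := by
  have := closure_convexHull_extremePoints (lp_compact h) (lp_convex h)
  rwa [((lp_ext_finite h).isCompact_convexHull (𝕜 := ℝ)).isClosed.closure_eq] at this

lemma exists_FN {d : ℕ} {P B : Set (Fin d → ℝ)} (hB : IsCompact B) (hne : B.Nonempty)
    (hext : IsExtreme ℝ (dualPolytope P) B) : ∃ g ∈ B, g ∈ FN P := by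
  obtain ⟨g, hg⟩ := hB.extremePoints_nonempty hne
  exact ⟨g, hg.1, hext.extremePoints_subset_extremePoints hg⟩

lemma FN_int {d : ℕ} {P : Set (Fin d → ℝ)} (hP : IsReflexive P) {u p : Fin d → ℝ}
    (hu : u ∈ FN P) (hp : IsLP p) : ∃ n : ℤ, dotp u p = n :=
  (lp_extreme hP.2.2 hu).dotp hp

/-- A facet through all the points where `u` is one. -/
lemma extend_FN {d : ℕ} {P : Set (Fin d → ℝ)} (hP : IsReflexive P) {u p q : Fin d → ℝ}
    (hu : u ∈ dualPolytope P) (hp : p ∈ P) (hq : q ∈ P) (hup : dotp u p = 1)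
    (huq : dotp u q = 1) : ∃ g ∈ FN P, dotp g p = 1 ∧ dotp g q = 1 := by
  set B : Set (Fin d → ℝ) := {g | g ∈ dualPolytope P ∧ dotp g p = 1 ∧ dotp g q = 1} with hB
  have hBc : IsCompact B := by
    apply (lp_compact hP.2.2).inter_right
    exact (isClosed_eq (dotp_cont p) continuous_const).inter
      (isClosed_eq (dotp_cont q) continuous_const)
  have hBe : IsExtreme ℝ (dualPolytope P) B := by
    refine ⟨fun x hx => hx.1, ?_⟩
    rintro a ha b hb g ⟨hg, hgp, hgq⟩ ⟨s, t, hs, ht, hst, rfl⟩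
    simp only [dotp_add_left, dotp_smul_left] at hgp hgq
    refine ⟨ha, ?_, ?_⟩
    · have := ha p hp; have := hb p hp; nlinarith
    · have := ha q hq; have := hb q hq; nlinarith
  obtain ⟨g, hg, hg'⟩ := exists_FN hBc ⟨u, hu, hup, huq⟩ hBe
  exact ⟨g, hg', hg.2⟩

lemma mem_of_FN {d : ℕ} {P : Set (Fin d → ℝ)} (hP : IsReflexive P) {p : Fin d → ℝ}
    (h : ∀ u ∈ FN P, dotp u p ≤ 1) : p ∈ P := by
  apply bipolar (lp_convex hP.1) (lp_compact hP.1).isClosed (interior_subset hP.2.1)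
  intro u hu
  rw [← lp_hull hP.2.2] at hu
  have := dual_convexHull (FN P) (u := p) (fun y hy => by rw [dotp_comm]; exact h y hy) u hu
  rwa [dotp_comm]

lemma FN_le {d : ℕ} {P : Set (Fin d → ℝ)} {u p : Fin d → ℝ} (hu : u ∈ FN P) (hp : p ∈ P) :
    dotp u p ≤ 1 := hu.1 p hp

lemma exists_pos_FN {d : ℕ} {P : Set (Fin d → ℝ)} (hP : IsReflexive P) {p : Fin d → ℝ}
    (hp : p ≠ 0) : ∃ u ∈ FN P, 0 < dotp u p := by
  by_contra! h
  have h1 : ∀ t : ℕ, (t : ℝ) • p ∈ P := fun t => mem_of_FN hP fun u hu => by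
    rw [dotp_smul_right]
    have := h u hu
    have : (0 : ℝ) ≤ t := t.cast_nonneg
    nlinarith
  obtain ⟨C, hC⟩ := (lp_compact hP.1).isBounded.exists_norm_le
  have hpn : 0 < ‖p‖ := norm_pos_iff.2 hp
  obtain ⟨t, ht⟩ := exists_nat_gt (C / ‖p‖)
  have := hC _ (h1 t)
  rw [norm_smul, Real.norm_natCast] at this
  rw [div_lt_iff₀ hpn] at ht
  linarith

/-- Trichotomy. -/
lemma sum_mem_P {d : ℕ} {P : Set (Fin d → ℝ)} (hP : IsReflexive P) {p q : Fin d → ℝ}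
    (hp : p ∈ P) (hq : q ∈ P) (hpl : IsLP p) (hql : IsLP q) (hpq : p + q ≠ 0)
    (h : ∀ u ∈ FN P, dotp u p = 1 → dotp u q ≠ 1) :
    p + q ∈ P ∧ ∃ u ∈ FN P, dotp u (p + q) = 1 := by
  have h1 : p + q ∈ P := mem_of_FN hP fun u hu => by
    obtain ⟨m, hm⟩ := FN_int hP hu hpl
    obtain ⟨n, hn⟩ := FN_int hP hu hql
    have a := FN_le hu hp
    have b := FN_le hu hq
    have c := h u hu
    rw [dotp_add_right]
    rw [hm, hn] at *
    norm_cast at *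
    omega
  refine ⟨h1, ?_⟩
  obtain ⟨u, hu, hpos⟩ := exists_pos_FN hP hpq
  refine ⟨u, hu, ?_⟩
  obtain ⟨m, hm⟩ := FN_int hP hu (hpl.add hql)
  have a := FN_le hu h1
  rw [hm] at a hpos ⊢
  norm_cast at *
  omega

/-- Slack lemma. -/
lemma slack {d : ℕ} {P : Set (Fin d → ℝ)} (hP : IsReflexive P) {u e : Fin d → ℝ}
    (hu : u ∈ dualPolytope P) (he : ∀ x ∈ VX P u, dotp e x ≤ 0) :
    ∃ ε > 0, u + (ε : ℝ) • e ∈ dualPolytope P := by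
  have key : ∀ᶠ ε : ℝ in nhdsWithin 0 (Set.Ioi 0), ∀ x ∈ Set.extremePoints ℝ P,
      dotp u x + ε * dotp e x ≤ 1 := by
    rw [Filter.eventually_all_finite (lp_ext_finite hP.1)]
    intro x hx
    rcases eq_or_lt_of_le (hu x hx.1) with h | h
    · have := he x ⟨hx, h⟩
      filter_upwards [self_mem_nhdsWithin] with ε hε
      have : (0 : ℝ) < ε := hε
      nlinarith
    · have hc : Continuous fun ε : ℝ => dotp u x + ε * dotp e x := by fun_prop
      have ht := (hc.tendsto 0).eventually (Iio_mem_nhds (show dotp u x + 0 * dotp e x < 1 by simpa using h))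
      filter_upwards [nhdsWithin_le_nhds ht] with ε hε
      exact le_of_lt hε
  obtain ⟨ε, h1, h2⟩ := (key.and self_mem_nhdsWithin).exists
  refine ⟨ε, h2, ?_⟩
  rw [← lp_hull hP.1]
  apply dual_convexHull
  intro x hx
  rw [dotp_add_left, dotp_smul_left]
  exact h1 x hx

lemma exists_annih {d : ℕ} {S : Set (Fin d → ℝ)} (h : Submodule.span ℝ S ≠ ⊤) :
    ∃ e : Fin d → ℝ, e ≠ 0 ∧ ∀ x ∈ S, dotp e x = 0 := by
  obtain ⟨f, hf, hf'⟩ := Submodule.exists_le_ker_of_lt_top _ (lt_top_iff_ne_top.2 h)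
  obtain ⟨e, he⟩ := exists_dotp f
  refine ⟨e, ?_, fun x hx => ?_⟩
  · rintro rfl
    exact hf (LinearMap.ext fun x => by rw [he, dotp_zero_left]; rfl)
  · rw [← he]; exact hf' (Submodule.subset_span hx)

lemma VX_span {d : ℕ} {P : Set (Fin d → ℝ)} (hP : IsReflexive P) {u : Fin d → ℝ}
    (hu : u ∈ FN P) : Submodule.span ℝ (VX P u) = ⊤ := by
  by_contra h
  obtain ⟨e, he, h0⟩ := exists_annih h
  obtain ⟨ε, hε, h1⟩ := slack hP hu.1 (e := e) (fun x hx => (h0 x hx).le)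
  obtain ⟨δ, hδ, h2⟩ := slack hP hu.1 (e := -e) (fun x hx => by
    rw [dotp_comm, dotp_neg_right, dotp_comm, h0 x hx]; simp)
  have hseg : u ∈ openSegment ℝ (u + ε • e) (u + δ • -e) := by
    refine ⟨δ / (ε + δ), ε / (ε + δ), by positivity, by positivity, by field_simp; ring, ?_⟩
    ext i
    simp
    field_simp
    ring
  have := hu.2 h1 h2 hseg
  have h3 : ε • e = 0 := by simpa using this
  rcases smul_eq_zero.1 h3 with h | h
  · exact hε.ne' h
  · exact he h

lemma FN_facet {d : ℕ} (hd : 0 < d) {P : Set (Fin d → ℝ)} (hP : IsReflexive P) {u : Fin d → ℝ}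
    (hu : u ∈ FN P) : IsFacet P {y ∈ P | dotp u y = 1} := by
  have hsp := VX_span hP hu
  have hne : (VX P u).Nonempty := by
    rw [Set.nonempty_iff_ne_empty]
    intro h
    rw [h, Submodule.span_empty] at hsp
    have : Nonempty (Fin d) := ⟨⟨0, hd⟩⟩
    exact bot_ne_top hsp
  obtain ⟨x0, hx0⟩ := hne
  set F : Set (Fin d → ℝ) := {y ∈ P | dotp u y = 1} with hF
  have hx0F : x0 ∈ F := ⟨hx0.1.1, hx0.2⟩
  refine ⟨u, ⟨x0, hx0F⟩, hu.1, rfl, ?_⟩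
  have hle : vectorSpan ℝ F ≤ LinearMap.ker (dotpL u) := by
    rw [vectorSpan_def, Submodule.span_le]
    rintro _ ⟨a, ha, b, hb, rfl⟩
    simp [dotpL_apply, dotp_sub_right, ha.2, hb.2]
  have hker : Module.finrank ℝ (LinearMap.ker (dotpL u)) = d - 1 := by
    have h1 := LinearMap.finrank_range_add_finrank_ker (dotpL u)
    have h2 : LinearMap.range (dotpL u) = ⊤ := by
      rw [LinearMap.range_eq_top]
      intro c
      exact ⟨c • x0, by rw [dotpL_apply, dotp_smul_right, hx0.2, mul_one]⟩
    rw [h2] at h1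
    simp at h1
    omega
  have hup : Submodule.span ℝ (VX P u) ≤ vectorSpan ℝ F ⊔ Submodule.span ℝ {x0} := by
    rw [Submodule.span_le]
    intro x hx
    have h1 : x - x0 ∈ vectorSpan ℝ F := vsub_mem_vectorSpan ℝ (⟨hx.1.1, hx.2⟩ : x ∈ F) hx0F
    have : x = (x - x0) + x0 := by simp
    rw [this]
    exact Submodule.add_mem_sup h1 (Submodule.mem_span_singleton_self x0)
  rw [hsp, top_le_iff] at hup
  have h3 := Submodule.finrank_add_le_finrank_add_finrank (vectorSpan ℝ F) (Submodule.span ℝ {x0})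
  rw [hup] at h3
  have h4 := finrank_span_singleton (K := ℝ) (v := x0) (by
    rintro rfl
    have := hx0.2
    rw [dotp_zero_right] at this
    norm_num at this)
  have h5 := Submodule.finrank_mono hle
  simp at h3
  omega

lemma VX_finite {d : ℕ} {P : Set (Fin d → ℝ)} (hP : IsReflexive P) (u : Fin d → ℝ) :
    (VX P u).Finite := (lp_ext_finite hP.1).subset fun _ hx => hx.1

lemma VX_card {d : ℕ} (hd : 0 < d) {P : Set (Fin d → ℝ)} (hP : IsReflexive P)
    (hs : IsSimplicial P) {u : Fin d → ℝ} (hu : u ∈ FN P) : (VX P u).ncard = d := by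
  refine Eq.trans ?_ (hs _ (FN_facet hd hP hu))
  congr 1
  ext x
  constructor
  · intro hx
    refine ⟨⟨hx.1.1, hx.2⟩, ?_⟩
    intro a ha b hb h
    exact hx.1.2 ha.1 hb.1 h
  · intro hx
    refine ⟨⟨hx.1.1, ?_⟩, hx.1.2⟩
    intro a ha b hb h
    have hx2 := hx.1.2
    obtain ⟨s, t, hs, ht, hst, h'⟩ := id h
    rw [← h', dotp_add_right, dotp_smul_right, dotp_smul_right] at hx2
    have h1 := hu.1 a ha
    have h2 := hu.1 b hb
    exact hx.2 ⟨ha, by nlinarith⟩ ⟨hb, by nlinarith⟩ h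

/-- Neighbouring facets: `g` contains all vertices of `u` except `x`. -/
def Nbr {d : ℕ} (P : Set (Fin d → ℝ)) (u x g : Fin d → ℝ) : Prop :=
  g ∈ FN P ∧ (∀ y ∈ VX P u, y ≠ x → dotp g y = 1) ∧ dotp g x ≤ 0

/-- Coordinates with respect to a facet, and existence of the neighbours. -/
lemma coords {d : ℕ} (hd : 0 < d) {P : Set (Fin d → ℝ)} (hP : IsReflexive P)
    (hs : IsSimplicial P) {u : Fin d → ℝ} (hu : u ∈ FN P) :
    ∃ (s : Finset (Fin d → ℝ)) (c : (Fin d → ℝ) → (Fin d → ℝ) →ₗ[ℝ] ℝ),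
      (∀ x, x ∈ s ↔ x ∈ VX P u) ∧ (∀ p, ∑ x ∈ s, c x p • x = p) ∧
      (∀ p, ∑ x ∈ s, c x p = dotp u p) ∧
      (∀ x ∈ s, ∀ y ∈ s, c x y = if y = x then 1 else 0) ∧
      (∀ x ∈ s, ∀ g, Nbr P u x g → ∀ p, dotp g p = dotp u p - c x p * (1 - dotp g x)) ∧
      (∀ x ∈ s, ∃ g, Nbr P u x g) := by
  classical
  set s := (VX_finite hP u).toFinset with hsdef
  have hmem : ∀ x, x ∈ s ↔ x ∈ VX P u := fun x => by simp [hsdef]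
  have hcard : s.card = d := by
    rw [hsdef, ← Set.ncard_eq_toFinset_card _ (VX_finite hP u)]
    exact VX_card hd hP hs hu
  have hrange : Set.range (fun x : s => (x : Fin d → ℝ)) = VX P u := by
    ext x; simp [hmem]
  have hsp : ⊤ ≤ Submodule.span ℝ (Set.range (fun x : s => (x : Fin d → ℝ))) := by
    rw [hrange, VX_span hP hu]
  have hli : LinearIndependent ℝ (fun x : s => (x : Fin d → ℝ)) :=
    linearIndependent_of_top_le_span_of_card_eq_finrank hsp (by simp [hcard])
  set b := Module.Basis.mk hli hsp with hb
  have hbx : ∀ x : s, b x = x := fun x => by simp [hb]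
  set c : (Fin d → ℝ) → (Fin d → ℝ) →ₗ[ℝ] ℝ := fun x => if h : x ∈ s then b.coord ⟨x, h⟩ else 0
    with hc
  have hcx : ∀ x : s, c x = b.coord x := fun x => by simp [hc]
  have hexp : ∀ p, ∑ x ∈ s, c x p • x = p := by
    intro p
    rw [← Finset.sum_coe_sort s]
    conv_rhs => rw [← b.sum_repr p]
    refine Finset.sum_congr rfl fun x _ => ?_
    rw [hcx, hbx, b.coord_apply]
  have hdot : ∀ g p, dotp g p = ∑ x ∈ s, c x p * dotp g x := by
    intro g p
    conv_lhs => rw [← hexp p]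
    rw [← dotpL_apply, map_sum]
    refine Finset.sum_congr rfl fun x _ => ?_
    rw [map_smul]; rfl
  have hdelta : ∀ x ∈ s, ∀ y ∈ s, c x y = if y = x then 1 else 0 := by
    intro x hx y hy
    have h1 := hcx ⟨x, hx⟩
    have h2 := hbx ⟨y, hy⟩
    simp only at h1 h2
    rw [h1]
    conv_lhs => rw [← h2]
    rw [b.coord_apply, b.repr_self, Finsupp.single_apply]
    simp
  have hsum : ∀ p, ∑ x ∈ s, c x p = dotp u p := by
    intro p
    rw [hdot]
    refine Finset.sum_congr rfl fun x hx => ?_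
    rw [((hmem x).1 hx).2, mul_one]
  refine ⟨s, c, hmem, hexp, hsum, hdelta, ?_, ?_⟩
  · intro x hx g hg p
    rw [hdot g p, ← hsum p, ← Finset.add_sum_erase s _ hx, ← Finset.add_sum_erase s (fun x => c x p) hx]
    have : ∑ y ∈ s.erase x, c y p * dotp g y = ∑ y ∈ s.erase x, c y p := by
      refine Finset.sum_congr rfl fun y hy => ?_
      rw [hg.2.1 y ((hmem y).1 (Finset.mem_of_mem_erase hy)) (Finset.ne_of_mem_erase hy), mul_one]
    rw [this]; ring
  · intro x hx
    obtain ⟨e, he⟩ := exists_dotp (c x)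
    set T : Set (Fin d → ℝ) := {g | g ∈ dualPolytope P ∧ ∀ y ∈ VX P u, y ≠ x → dotp g y = 1} with hT
    have hTc : IsCompact T := by
      apply (lp_compact hP.2.2).inter_right
      have : {g : Fin d → ℝ | ∀ y ∈ VX P u, y ≠ x → dotp g y = 1} =
          ⋂ y, ⋂ (_ : y ∈ VX P u), ⋂ (_ : y ≠ x), {g | dotp g y = 1} := by
        ext g; simp
      change IsClosed {g : Fin d → ℝ | ∀ y ∈ VX P u, y ≠ x → dotp g y = 1}
      rw [this]
      exact isClosed_iInter fun y => isClosed_iInter fun _ => isClosed_iInter fun _ =>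
        isClosed_eq (dotp_cont y) continuous_const
    have huT : u ∈ T := ⟨hu.1, fun y hy _ => hy.2⟩
    obtain ⟨g0, hg0, hmin⟩ := hTc.exists_isMinOn ⟨u, huT⟩ (dotp_cont x).continuousOn
    have hmin' : ∀ g ∈ T, dotp g0 x ≤ dotp g x := fun g hg => hmin hg
    set B : Set (Fin d → ℝ) := {g | g ∈ T ∧ dotp g x = dotp g0 x} with hB
    have hBc : IsCompact B := hTc.inter_right (isClosed_eq (dotp_cont x) continuous_const)
    have hBe : IsExtreme ℝ (dualPolytope P) B := by
      refine ⟨fun x hx => hx.1.1, ?_⟩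
      have aux : ∀ a ∈ dualPolytope P, ∀ b ∈ dualPolytope P, ∀ σ τ : ℝ, 0 < σ → 0 < τ → σ + τ = 1 →
          σ • a + τ • b ∈ T → a ∈ T := by
        intro a ha b hb σ τ hσ hτ hst h
        refine ⟨ha, fun y hy hyx => ?_⟩
        have h1 := h.2 y hy hyx
        rw [dotp_add_left, dotp_smul_left, dotp_smul_left] at h1
        have := ha y hy.1.1; have := hb y hy.1.1; nlinarith
      rintro a ha b hb g ⟨hg, hgx⟩ ⟨σ, τ, hσ, hτ, hst, rfl⟩
      have haT := aux a ha b hb σ τ hσ hτ hst hg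
      have hbT := aux b hb a ha τ σ hτ hσ (by linarith) (by rwa [add_comm])
      refine ⟨haT, ?_⟩
      rw [dotp_add_left, dotp_smul_left, dotp_smul_left] at hgx
      have h1 := hmin' a haT
      have h2 := hmin' b hbT
      have h3 : σ * (dotp a x - dotp g0 x) + τ * (dotp b x - dotp g0 x) = 0 := by
        have : τ = 1 - σ := by linarith
        rw [this] at hgx ⊢
        linarith
      have h4 : 0 ≤ τ * (dotp b x - dotp g0 x) := mul_nonneg hτ.le (by linarith)
      have h5 : 0 ≤ σ * (dotp a x - dotp g0 x) := mul_nonneg hσ.le (by linarith)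
      have h6 : σ * (dotp a x - dotp g0 x) = 0 := by linarith
      rcases mul_eq_zero.1 h6 with h | h
      · exact absurd h hσ.ne'
      · linarith
    obtain ⟨g, hg, hgF⟩ := exists_FN hBc ⟨g0, hg0, rfl⟩ hBe
    refine ⟨g, hgF, hg.1.2, ?_⟩
    have hxV := (hmem x).1 hx
    have hex : dotp e x = 1 := by rw [← he, hdelta x hx x hx]; simp
    have hey : ∀ y ∈ VX P u, y ≠ x → dotp e y = 0 := fun y hy hyx => by
      rw [← he, hdelta x hx y ((hmem y).2 hy)]; simp [hyx]
    obtain ⟨ε, hε, h1⟩ := slack hP hu.1 (e := -e) (fun y hy => by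
      rw [dotp_comm, dotp_neg_right, dotp_comm]
      by_cases hyx : y = x
      · rw [hyx, hex]; norm_num
      · rw [hey y hy hyx]; simp)
    have h2 : u + ε • -e ∈ T := by
      refine ⟨h1, fun y hy hyx => ?_⟩
      rw [dotp_add_left, dotp_smul_left, dotp_comm (-e), dotp_neg_right, dotp_comm y, hey y hy hyx,
        hy.2]; simp
    have h3 := hmin' _ h2
    rw [dotp_add_left, dotp_smul_left, dotp_comm (-e), dotp_neg_right, dotp_comm x e, hex,
        hxV.2, ← hg.2] at h3
    obtain ⟨n, hn⟩ := FN_int hP hgF (lp_extreme hP.1 hxV.1)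
    have h4 : dotp g x < 1 := by linarith
    rw [hn] at h4 ⊢
    norm_cast at *
    omega

/-! ### Combinatorics of the facets -/

/-- `p` and `q` do not lie in a common facet. -/
def NA {d : ℕ} (P : Set (Fin d → ℝ)) (p q : Fin d → ℝ) : Prop :=
  ∀ u ∈ FN P, dotp u p = 1 → dotp u q ≠ 1

lemma NA.symm {d : ℕ} {P : Set (Fin d → ℝ)} {p q : Fin d → ℝ} (h : NA P p q) : NA P q p :=
  fun u hu h1 h2 => h u hu h2 h1

lemma FN_pos {d : ℕ} {P : Set (Fin d → ℝ)} (hP : IsReflexive P) {u p : Fin d → ℝ}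
    (hu : u ∈ FN P) (hp : p ∈ P) (hpl : IsLP p) (h : 0 < dotp u p) : dotp u p = 1 := by
  obtain ⟨m, hm⟩ := FN_int hP hu hpl
  have a := FN_le hu hp
  rw [hm] at a h ⊢
  norm_cast at *
  omega

lemma FN_nonpos {d : ℕ} {P : Set (Fin d → ℝ)} (hP : IsReflexive P) {u p : Fin d → ℝ}
    (hu : u ∈ FN P) (hp : p ∈ P) (hpl : IsLP p) (h : dotp u p ≠ 1) : dotp u p ≤ 0 := by
  by_contra! h'
  exact h (FN_pos hP hu hp hpl h')

lemma FN_cases {d : ℕ} {P : Set (Fin d → ℝ)} (hP : IsReflexive P) {u p : Fin d → ℝ}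
    (hu : u ∈ FN P) (hp : p ∈ P) (hpl : IsLP p) :
    dotp u p = 1 ∨ dotp u p = 0 ∨ dotp u p ≤ -1 := by
  obtain ⟨m, hm⟩ := FN_int hP hu hpl
  have a := FN_le hu hp
  rw [hm] at a ⊢
  norm_cast at *
  omega

/-- If `u p = 0`, then some facet neighbouring `u` contains `p`. -/
lemma exists_nbr {d : ℕ} (hd : 0 < d) {P : Set (Fin d → ℝ)} (hP : IsReflexive P)
    (hs : IsSimplicial P) {u p : Fin d → ℝ} (hu : u ∈ FN P) (hp : p ∈ P) (hpl : IsLP p)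
    (hp0 : p ≠ 0) (hup : dotp u p = 0) :
    ∃ x ∈ VX P u, ∀ g, Nbr P u x g → dotp g p = 1 := by
  obtain ⟨s, c, hmem, hexp, hsum, hdel, hN, hex⟩ := coords hd hP hs hu
  by_cases h : ∃ x ∈ s, c x p < 0
  · obtain ⟨x, hx, hc⟩ := h
    refine ⟨x, (hmem x).1 hx, fun g hg => FN_pos hP hg.1 hp hpl ?_⟩
    rw [hN x hx g hg, hup]
    have := hg.2.2
    nlinarith
  · push Not at h
    exfalso
    apply hp0
    have h1 := (Finset.sum_eq_zero_iff_of_nonneg h).1 ((hsum p).trans hup)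
    rw [← hexp p]
    exact Finset.sum_eq_zero fun x hx => by rw [h1 x hx, zero_smul]

lemma nbr_ex {d : ℕ} (hd : 0 < d) {P : Set (Fin d → ℝ)} (hP : IsReflexive P)
    (hs : IsSimplicial P) {u x : Fin d → ℝ} (hu : u ∈ FN P) (hx : x ∈ VX P u) :
    ∃ g, Nbr P u x g := by
  obtain ⟨s, c, hmem, hexp, hsum, hdel, hN, hex⟩ := coords hd hP hs hu
  exact hex x ((hmem x).2 hx)

/-- If `v`, `w` are not in a common facet, `u v = 1` and `u w = 0`, then `w` is in the facet
neighbouring `u` opposite to `v`. -/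
lemma lemA {d : ℕ} (hd : 0 < d) {P : Set (Fin d → ℝ)} (hP : IsReflexive P)
    (hs : IsSimplicial P) {u v w : Fin d → ℝ} (hu : u ∈ FN P) (hv : v ∈ Set.extremePoints ℝ P)
    (hw : w ∈ P) (hwl : IsLP w) (hw0 : w ≠ 0) (hna : NA P v w)
    (huv : dotp u v = 1) (huw : dotp u w = 0) : ∀ g, Nbr P u v g → dotp g w = 1 := by
  obtain ⟨x, hx, h⟩ := exists_nbr hd hP hs hu hw hwl hw0 huw
  by_cases hxv : x = v
  · rw [← hxv]; exact h
  · exfalso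
    obtain ⟨g, hg⟩ := nbr_ex hd hP hs hu hx
    exact hna g hg.1 (hg.2.1 v ⟨hv, huv⟩ (Ne.symm hxv)) (h g hg)

/-- Vertices of a neighbouring facet. -/
lemma nbr_vertices {d : ℕ} (hd : 0 < d) {P : Set (Fin d → ℝ)} (hP : IsReflexive P)
    (hs : IsSimplicial P) {u x g p : Fin d → ℝ} (hu : u ∈ FN P) (hx : x ∈ VX P u)
    (hg : Nbr P u x g) (hp : p ∈ VX P g) (hpu : dotp u p ≠ 1) :
    ∀ q ∈ VX P g, q = p ∨ (q ∈ VX P u ∧ q ≠ x) := by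
  have h1 : insert p (VX P u \ {x}) ⊆ VX P g := by
    rintro q (rfl | hq)
    · exact hp
    · exact ⟨hq.1.1, hg.2.1 q hq.1 hq.2⟩
  have hfin := VX_finite hP u
  have hc : (insert p (VX P u \ {x})).ncard = d := by
    rw [Set.ncard_insert_of_notMem (fun h => hpu h.1.2) (hfin.subset Set.sdiff_subset),
      Set.ncard_sdiff_singleton_of_mem hx, VX_card hd hP hs hu]
    omega
  have h2 := Set.eq_of_subset_of_ncard_le h1
    (by have := VX_card hd hP hs hg.1; omega) (VX_finite hP g)
  intro q hq
  rw [← h2] at hq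
  rcases hq with h | h
  · exact Or.inl h
  · exact Or.inr ⟨h.1, h.2⟩

/-- `w'` and `v + w` are not in a common facet. -/
lemma lemZ {d : ℕ} (hd : 0 < d) {P : Set (Fin d → ℝ)} (hP : IsReflexive P)
    (hs : IsSimplicial P) {v w w' : Fin d → ℝ} (hv : v ∈ Set.extremePoints ℝ P)
    (hw : w ∈ Set.extremePoints ℝ P) (hw' : w' ∈ Set.extremePoints ℝ P) (hv0 : v ≠ 0)
    (hww' : w ≠ w') (hna : NA P v w) (hna' : NA P v w') : NA P (v + w) w' := by
  intro u hu h1 h2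
  rw [dotp_add_right] at h1
  have a := FN_nonpos hP hu hv.1 (lp_extreme hP.1 hv) (fun h => hna' u hu h h2)
  have b := FN_le hu hw.1
  have hv' : dotp u v = 0 := by linarith
  have hw1 : dotp u w = 1 := by linarith
  obtain ⟨g, hg⟩ := nbr_ex hd hP hs hu (x := w) ⟨hw, hw1⟩
  have h3 := lemA hd hP hs hu hw hv.1 (lp_extreme hP.1 hv) hv0 hna.symm hw1 hv' g hg
  exact hna' g hg.1 h3 (hg.2.1 w' ⟨hw', h2⟩ hww'.symm)

lemma lemC {d : ℕ} (hd : 0 < d) {P : Set (Fin d → ℝ)} (hP : IsReflexive P)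
    (hs : IsSimplicial P) {u v w w' : Fin d → ℝ} (hv : v ∈ Set.extremePoints ℝ P)
    (hw : w ∈ Set.extremePoints ℝ P) (hw' : w' ∈ Set.extremePoints ℝ P) (hv0 : v ≠ 0)
    (hw'0 : w' ≠ 0)
    (hww' : w ≠ w') (hvw' : v + w' ≠ 0) (hna : NA P v w) (hna' : NA P v w') (hu : u ∈ FN P)
    (h1 : dotp u v = 0) (h2 : dotp u w = 1) (h3 : dotp u w' = 0) : False := by
  have hvl := lp_extreme hP.1 hv
  have hwl' := lp_extreme hP.1 hw'
  have hz := (sum_mem_P hP hv.1 hw'.1 hvl hwl' hvw' hna').1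
  obtain ⟨x, hx, hx'⟩ := exists_nbr hd hP hs hu hz (hvl.add hwl') hvw' (by
    rw [dotp_add_right]; linarith)
  obtain ⟨g, hg⟩ := nbr_ex hd hP hs hu hx
  have hgz := hx' g hg
  by_cases hxw : x = w
  · subst hxw
    have hgv := lemA hd hP hs hu hw hv.1 hvl hv0 hna.symm h2 h1 g hg
    rw [dotp_add_right] at hgz
    have hN : Nbr P g v u := by
      refine ⟨hu, fun y hy hyv => ?_, h1.le⟩
      rcases nbr_vertices hd hP hs hu hx hg ⟨hv, hgv⟩ (by rw [h1]; norm_num) y hy with h | h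
      · exact absurd h hyv
      · exact h.1.2
    have := lemA hd hP hs hg.1 hv hw'.1 hwl' hw'0 hna' hgv (by linarith) u hN
    linarith
  · exact lemZ hd hP hs hv hw' hw hv0 hww'.symm hna' hna g hg.1 hgz
      (hg.2.1 w ⟨hw, h2⟩ (Ne.symm hxw))

lemma lemD {d : ℕ} (hd : 0 < d) {P : Set (Fin d → ℝ)} (hP : IsReflexive P)
    (hs : IsSimplicial P) {u v w w' : Fin d → ℝ} (hv : v ∈ Set.extremePoints ℝ P)
    (hw : w ∈ Set.extremePoints ℝ P) (hw' : w' ∈ Set.extremePoints ℝ P) (hv0 : v ≠ 0)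
    (hw0 : w ≠ 0) (hw'0 : w' ≠ 0)
    (hww' : w ≠ w') (hvw : v + w ≠ 0) (hvw' : v + w' ≠ 0) (hna : NA P v w) (hna' : NA P v w')
    (hu : u ∈ FN P)
    (h1 : dotp u v = -1) (h2 : dotp u w = 1) (h3 : dotp u w' = 1) : w + w' = (-2 : ℝ) • v := by
  classical
  have hvl := lp_extreme hP.1 hv
  have hwl := lp_extreme hP.1 hw
  have hwl' := lp_extreme hP.1 hw'
  obtain ⟨s, c, hmem, hexp, hsum, hdel, hN, hex⟩ := coords hd hP hs hu
  have key : ∀ a b : Fin d → ℝ, a ∈ Set.extremePoints ℝ P → b ∈ Set.extremePoints ℝ P →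
      a ≠ b → v + a ≠ 0 → NA P v a → NA P v b → b ≠ 0 → v + b ≠ 0 → dotp u a = 1 → dotp u b = 1 →
      (-(1/2) ≤ c b v ∧ ∀ x ∈ s, x ≠ b → x ≠ a → 0 ≤ c x v) := by
    intro a b ha hb hab hva hnaa hnab hb0 hvb hua hub
    have hal := lp_extreme hP.1 ha
    have hz := (sum_mem_P hP hv.1 ha.1 hvl hal hva hnaa).1
    have hZ := lemZ hd hP hs hv ha hb hv0 hab hnaa hnab
    have has : a ∈ s := (hmem a).2 ⟨ha, hua⟩
    have hbs : b ∈ s := (hmem b).2 ⟨hb, hub⟩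
    have hneg : ∀ x ∈ s, c x (v + a) < 0 → ∀ g, Nbr P u x g → dotp g (v + a) = 1 := by
      intro x hx hc g hg
      apply FN_pos hP hg.1 hz (hvl.add hal)
      rw [hN x hx g hg, dotp_add_right, h1, hua]
      have := hg.2.2
      nlinarith
    have hnn : ∀ x ∈ s, x ≠ b → 0 ≤ c x (v + a) := by
      intro x hx hxb
      by_contra! hc
      obtain ⟨g, hg⟩ := hex x hx
      exact hZ g hg.1 (hneg x hx hc g hg) (hg.2.1 b ⟨hb, hub⟩ (Ne.symm hxb))
    constructor
    · by_contra! hc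
      obtain ⟨g, hg⟩ := hex b hbs
      have hca : c b (v + a) < 0 := by
        rw [map_add, hdel b hbs a has]; simp [hab]; linarith
      have hgz := hneg b hbs hca g hg
      have hga := hg.2.1 a ⟨ha, hua⟩ hab
      rw [dotp_add_right] at hgz
      have hgv : dotp g v = 0 := by linarith
      have hgb := hg.2.2
      have hf := hN b hbs g hg v
      rw [hgv, h1] at hf
      have hgb0 : dotp g b = 0 := by
        rcases FN_cases hP hg.1 hb.1 (lp_extreme hP.1 hb) with h | h | h
        · linarith
        · exact h
        · nlinarith
      exact lemC hd hP hs hv ha hb hv0 hb0 hab hvb hnaa hnab hg.1 hgv hga hgb0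
    · intro x hx hxb hxa
      have := hnn x hx hxb
      rw [map_add, hdel x hx a has] at this
      simpa [Ne.symm hxa] using this
  obtain ⟨k1, k2⟩ := key w w' hw hw' hww' hvw hna hna' hw'0 hvw' h2 h3
  obtain ⟨k3, -⟩ := key w' w hw' hw hww'.symm hvw' hna' hna hw0 hvw h3 h2
  have hws : w ∈ s := (hmem w).2 ⟨hw, h2⟩
  have hws' : w' ∈ s.erase w := Finset.mem_erase.2 ⟨hww'.symm, (hmem w').2 ⟨hw', h3⟩⟩
  have hS := hsum v
  rw [← Finset.add_sum_erase s _ hws, ← Finset.add_sum_erase _ _ hws', h1] at hS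
  have hrest : ∀ x ∈ (s.erase w).erase w', 0 ≤ c x v := by
    intro x hx
    simp only [Finset.mem_erase] at hx
    exact k2 x hx.2.2 hx.1 hx.2.1
  have hr0 := Finset.sum_nonneg hrest
  have hr1 := (Finset.sum_eq_zero_iff_of_nonneg hrest).1 (by linarith)
  have e1 : c w v = -(1/2) := by linarith
  have e2 : c w' v = -(1/2) := by linarith
  have hE := hexp v
  rw [← Finset.add_sum_erase s _ hws, ← Finset.add_sum_erase _ _ hws',
    Finset.sum_eq_zero (fun x hx => by rw [hr1 x hx, zero_smul]), e1, e2] at hE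
  rw [← hE]
  module

/-- The linear relation. -/
lemma relation {d : ℕ} (hd : 0 < d) {P : Set (Fin d → ℝ)} (hP : IsReflexive P)
    (hs : IsSimplicial P) {v w w' : Fin d → ℝ} (hv : v ∈ Set.extremePoints ℝ P)
    (hw : w ∈ Set.extremePoints ℝ P) (hw' : w' ∈ Set.extremePoints ℝ P) (hv0 : v ≠ 0)
    (hw0 : w ≠ 0) (hw'0 : w' ≠ 0)
    (hww' : w ≠ w') (hvw : v + w ≠ 0) (hvw' : v + w' ≠ 0) (hna : NA P v w) (hna' : NA P v w') :
    w + w' = (-1 : ℝ) • v ∨ w + w' = (-2 : ℝ) • v := by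
  have hvl := lp_extreme hP.1 hv
  have hwl := lp_extreme hP.1 hw
  have hwl' := lp_extreme hP.1 hw'
  by_cases hy : v + w + w' = 0
  · left
    have : w + w' = (v + w + w') - v := by abel
    rw [this, hy]; module
  have hz := (sum_mem_P hP hv.1 hw.1 hvl hwl hvw hna).1
  have hz' := (sum_mem_P hP hv.1 hw'.1 hvl hwl' hvw' hna').1
  have hZ := lemZ hd hP hs hv hw hw' hv0 hww' hna hna'
  obtain ⟨-, u, hu, h1⟩ := sum_mem_P hP hz hw'.1 (hvl.add hwl) hwl' hy hZ
  have hle := FN_le hu hz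
  have hle' := FN_le hu hz'
  rw [dotp_add_right, dotp_add_right] at h1
  rw [dotp_add_right] at hle hle'
  have aw := FN_le hu hw.1
  have aw' := FN_le hu hw'.1
  rcases FN_cases hP hu hv.1 hvl with h | h | h
  · have b := FN_nonpos hP hu hw.1 hwl (hna u hu h)
    have b' := FN_nonpos hP hu hw'.1 hwl' (hna' u hu h)
    exfalso
    obtain ⟨g, hg⟩ := nbr_ex hd hP hs hu (x := v) ⟨hv, h⟩
    have g1 := lemA hd hP hs hu hv hw.1 hwl hw0 hna h (by linarith) g hg
    have g2 := lemA hd hP hs hu hv hw'.1 hwl' hw'0 hna' h (by linarith) g hg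
    rcases nbr_vertices hd hP hs hu ⟨hv, h⟩ hg ⟨hw, g1⟩ (hna u hu h) w' ⟨hw', g2⟩ with e | e
    · exact hww' e.symm
    · exact hna' u hu h e.1.2
  · exfalso
    rcases FN_cases hP hu hw.1 hwl with k | k | k
    · exact lemC hd hP hs hv hw hw' hv0 hw'0 hww' hvw' hna hna' hu h k (by linarith)
    · exact lemC hd hP hs hv hw' hw hv0 hw0 hww'.symm hvw hna' hna hu h (by linarith) k
    · linarith
  · right
    exact lemD hd hP hs hv hw hw' hv0 hw0 hw'0 hww' hvw hvw' hna hna' hu (by linarith)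
      (by linarith) (by linarith)

/-! ### The planar section -/

lemma ext_ne_zero {d : ℕ} {P : Set (Fin d → ℝ)} (hP : IsReflexive P) {x y : Fin d → ℝ}
    (hx : x ∈ Set.extremePoints ℝ P) (hy : y ∈ P) (hxy : x ≠ y) : x ≠ 0 := by
  rintro rfl
  have hc : Continuous fun ε : ℝ => -ε • y := by fun_prop
  have h1 : ∀ᶠ ε : ℝ in nhdsWithin 0 (Set.Ioi 0), -ε • y ∈ P :=
    nhdsWithin_le_nhds ((hc.tendsto 0).eventually
      (by simpa using mem_interior_iff_mem_nhds.1 hP.2.1))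
  obtain ⟨ε, h2, h3⟩ := (h1.and self_mem_nhdsWithin).exists
  have h3' : (0 : ℝ) < ε := h3
  refine hxy (hx.2 hy h2 ⟨ε / (1 + ε), 1 / (1 + ε), by positivity, by positivity, ?_, ?_⟩).symm
  · field_simp; ring
  · rw [smul_smul, ← add_smul]
    have : ε / (1 + ε) + 1 / (1 + ε) * -ε = 0 := by field_simp; ring
    rw [this, zero_smul]

lemma indep {d : ℕ} {P : Set (Fin d → ℝ)} (hP : IsReflexive P) {v w : Fin d → ℝ}
    (hv : v ∈ P) (hw : w ∈ P) (hvl : IsLP v) (hwl : IsLP w) (hv0 : v ≠ 0) (hw0 : w ≠ 0)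
    (hna : NA P v w) (hvw : v + w ≠ 0) : LinearIndependent ℝ ![v, w] := by
  rw [LinearIndependent.pair_iff' hv0]
  intro a ha
  obtain ⟨u, hu, hpos⟩ := exists_pos_FN hP hv0
  have huv := FN_pos hP hu hv hvl hpos
  obtain ⟨g, hg, hpos'⟩ := exists_pos_FN hP hw0
  have hgw := FN_pos hP hg hw hwl hpos'
  have huw := hna u hu huv
  have hgv := hna.symm g hg hgw
  obtain ⟨m, hm⟩ := FN_int hP hu hwl
  obtain ⟨n, hn⟩ := FN_int hP hg hvl
  have l1 := FN_le hu hw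
  have l2 := FN_le hg hv
  have e1 : a = m := by rw [← hm, ← ha, dotp_smul_right, huv, mul_one]
  have e2 : a * n = 1 := by rw [← hn, ← dotp_smul_right, ha, hgw]
  rw [hm] at huw l1
  rw [hn] at hgv l2
  rw [e1] at e2
  norm_cast at e2 huw l1 hgv l2
  rcases Int.eq_one_or_neg_one_of_mul_eq_one e2 with h | h
  · exact huw h
  · apply hvw
    rw [← ha, e1, h]
    push_cast
    module

lemma hull2 {d : ℕ} {K : Set (Fin d → ℝ)} (hK : Convex ℝ K) (h0 : (0 : Fin d → ℝ) ∈ K)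
    {y z : Fin d → ℝ} (hy : y ∈ K) (hz : z ∈ K) {a b : ℝ} (ha : 0 ≤ a) (hb : 0 ≤ b)
    (hab : a + b ≤ 1) : a • y + b • z ∈ K := by
  have h1 := hK.sum_mem (t := Finset.univ) (w := ![1 - a - b, a, b]) (z := ![0, y, z])
    (by intro i _; fin_cases i <;> simp <;> linarith) (by simp [Fin.sum_univ_three]; ring)
    (by intro i _; fin_cases i <;> simp [h0, hy, hz])
  simpa [Fin.sum_univ_three] using h1

/-- The convex-geometric conclusion for a sector. -/
def Sec {d : ℕ} (P : Set (Fin d → ℝ)) (p r q : Fin d → ℝ) : Prop :=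
  ∀ K : Set (Fin d → ℝ), Convex ℝ K → (0 : Fin d → ℝ) ∈ K → p ∈ K → r ∈ K → q ∈ K →
    ∀ α β : ℝ, 0 ≤ α → 0 ≤ β → α • p + β • q ∈ P → α • p + β • q ∈ K

/-- Full data of the corner between two non adjacent points. -/
def Corner {d : ℕ} (P : Set (Fin d → ℝ)) (p q r : Fin d → ℝ) (a b : ℝ) (u1 u2 : Fin d → ℝ) :
    Prop :=
  1 ≤ a ∧ 1 ≤ b ∧ r = a • p + b • q ∧ IsLP r ∧ r ∈ P ∧ u1 ∈ FN P ∧ u2 ∈ FN P ∧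
    dotp u1 p = 1 ∧ dotp u1 r = 1 ∧ dotp u2 r = 1 ∧ dotp u2 q = 1 ∧
    dotp u1 q * dotp u2 p = 0 ∧ Sec P p r q

lemma Corner.symm {d : ℕ} {P : Set (Fin d → ℝ)} {p q r : Fin d → ℝ} {a b : ℝ}
    {u1 u2 : Fin d → ℝ} (h : Corner P p q r a b u1 u2) : Corner P q p r b a u2 u1 := by
  obtain ⟨h1, h2, h3, h4, h5, h6, h7, h8, h9, h10, h11, h12, h13⟩ := h
  refine ⟨h2, h1, by rw [h3, add_comm], h4, h5, h7, h6, h11, h10, h9, h8,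
    by rw [mul_comm]; exact h12, ?_⟩
  intro K hK h0 hq hr hp α β hα hβ h
  rw [add_comm] at h ⊢
  exact h13 K hK h0 hp hr hq β α hβ hα h

lemma corner_aux {d : ℕ} {P : Set (Fin d → ℝ)} (hP : IsReflexive P) {p q u : Fin d → ℝ}
    (hpl : IsLP p) (hql : IsLP q) (hq : q ∈ P)
    (hpq : p + q ∈ P) (hu : u ∈ FN P) (h1 : dotp u p = 1)
    (h2 : dotp u q = 0) (hq0 : q ≠ 0) : ∃ r a b u1 u2, Corner P p q r a b u1 u2 := by
  classical
  have hex : ∃ n : ℕ, p + ((n + 1 : ℕ) : ℝ) • q ∉ P := by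
    by_contra! h
    obtain ⟨g, hg, hpos⟩ := exists_pos_FN hP hq0
    have hgq := FN_pos hP hg hq hql hpos
    obtain ⟨n, hn⟩ := exists_nat_gt (1 - dotp g p)
    have := FN_le hg (h n)
    rw [dotp_add_right, dotp_smul_right, hgq] at this
    push_cast at this
    linarith
  obtain ⟨n, hn, hmin⟩ : ∃ n : ℕ, p + ((n + 1 : ℕ) : ℝ) • q ∉ P ∧
      ∀ m < n, p + ((m + 1 : ℕ) : ℝ) • q ∈ P :=
    ⟨Nat.find hex, Nat.find_spec hex, fun m hm => by simpa using Nat.find_min hex hm⟩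
  have hn1 : 1 ≤ n := by
    by_contra! h
    interval_cases n
    exact hn (by simpa using hpq)
  have hr : p + (n : ℝ) • q ∈ P := by
    have := hmin (n - 1) (by omega)
    rwa [Nat.sub_add_cancel hn1] at this
  have hrl := hpl.add (hql.nsmul n)
  obtain ⟨g, hg, hgt⟩ : ∃ g ∈ FN P, 1 < dotp g (p + ((n + 1 : ℕ) : ℝ) • q) := by
    by_contra! h
    exact hn (mem_of_FN hP h)
  have hle := FN_le hg hr
  rw [dotp_add_right, dotp_smul_right] at hgt hle
  push_cast at hgt
  have hgq := FN_pos hP hg hq hql (by linarith)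
  have hgr : dotp g (p + (n : ℝ) • q) = 1 := by
    apply FN_pos hP hg hr hrl
    rw [dotp_add_right, dotp_smul_right]
    rw [hgq] at hgt ⊢
    linarith
  have hgp : dotp g p = 1 - n := by
    rw [dotp_add_right, dotp_smul_right, hgq] at hgr
    linarith
  have hnR : (1 : ℝ) ≤ n := by exact_mod_cast hn1
  refine ⟨p + (n : ℝ) • q, 1, n, u, g, le_refl _, hnR, by simp, hrl, hr, hu, hg, h1, ?_, hgr, hgq,
    by rw [h2, zero_mul], ?_⟩
  · rw [dotp_add_right, dotp_smul_right, h1, h2]; simp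
  · intro K hK h0 hpK hrK hqK α β hα hβ hx
    have l1 := FN_le hu hx
    have l2 := FN_le hg hx
    rw [dotp_add_right, dotp_smul_right, dotp_smul_right, h1, h2] at l1
    rw [dotp_add_right, dotp_smul_right, dotp_smul_right, hgp, hgq] at l2
    by_cases hc : β ≤ n * α
    · have e : α • p + β • q = (α - β / n) • p + (β / n) • (p + (n : ℝ) • q) := by
        rw [smul_add, smul_smul, div_mul_cancel₀ _ (by positivity)]
        module
      rw [e]
      apply hull2 hK h0 hpK hrK
      · rw [sub_nonneg, div_le_iff₀ (by positivity)]; linarith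
      · positivity
      · linarith
    · have e : α • p + β • q = α • (p + (n : ℝ) • q) + (β - n * α) • q := by
        module
      rw [e]
      apply hull2 hK h0 hrK hqK hα <;> linarith

lemma corner {d : ℕ} {P : Set (Fin d → ℝ)} (hP : IsReflexive P) {p q : Fin d → ℝ}
    (hp : p ∈ P) (hq : q ∈ P) (hpl : IsLP p) (hql : IsLP q) (hp0 : p ≠ 0) (hq0 : q ≠ 0)
    (hpq : p + q ≠ 0) (hna : NA P p q) : ∃ r a b u1 u2, Corner P p q r a b u1 u2 := by
  obtain ⟨hz, u, hu, huz⟩ := sum_mem_P hP hp hq hpl hql hpq hna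
  rw [dotp_add_right] at huz
  have l1 := FN_le hu hp
  rcases FN_cases hP hu hq hql with h | h | h
  · obtain ⟨r, a, b, u1, u2, hc⟩ := corner_aux hP hql hpl hp (by rwa [add_comm]) hu h
      (by linarith) hp0
    exact ⟨r, b, a, u2, u1, hc.symm⟩
  · exact corner_aux hP hpl hql hq hz hu (by linarith) h hq0
  · linarith

lemma sector {d : ℕ} {P : Set (Fin d → ℝ)} (hP : IsReflexive P) {p q : Fin d → ℝ}
    (hp : p ∈ P) (hq : q ∈ P) (hpl : IsLP p) (hql : IsLP q) (hp0 : p ≠ 0) (hq0 : q ≠ 0)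
    (hpq : p + q ≠ 0) : ∃ r : Fin d → ℝ, ∃ a b : ℝ, r = a • p + b • q ∧ IsLP r ∧ r ∈ P ∧
      Sec P p r q := by
  by_cases hna : NA P p q
  · obtain ⟨r, a, b, u1, u2, hc⟩ := corner hP hp hq hpl hql hp0 hq0 hpq hna
    exact ⟨r, a, b, hc.2.2.1, hc.2.2.2.1, hc.2.2.2.2.1, hc.2.2.2.2.2.2.2.2.2.2.2.2⟩
  · unfold NA at hna
    push Not at hna
    obtain ⟨u, hu, h1, h2⟩ := hna
    refine ⟨p, 1, 0, by simp, hpl, hp, ?_⟩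
    intro K hK h0 hpK _ hqK α β hα hβ hx
    have l := FN_le hu hx
    rw [dotp_add_right, dotp_smul_right, dotp_smul_right, h1, h2] at l
    exact hull2 hK h0 hpK hqK hα hβ (by linarith)

/-- The dual of the section is a lattice polytope. -/
lemma dual_section {d : ℕ} {P : Set (Fin d → ℝ)} (hP : IsReflexive P)
    (φ : (Fin 2 → ℝ) →ₗ[ℝ] (Fin d → ℝ)) (hφ : ∀ x, IsLP x → IsLP (φ x)) :
    IsLatticePolytope (dualPolytope (φ ⁻¹' P)) := by
  classical
  obtain ⟨U, hU, hdU⟩ := hP.2.2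
  let T : (Fin d → ℝ) →ₗ[ℝ] (Fin 2 → ℝ) :=
    { toFun := fun u j => dotp u (φ (Pi.single j 1))
      map_add' := fun a b => by ext j; simp [dotp_add_left]
      map_smul' := fun c a => by ext j; simp [dotp_smul_left] }
  have hT : ∀ u x, dotp (T u) x = dotp u (φ x) := by
    intro u x
    have e : x = x 0 • Pi.single 0 1 + x 1 • Pi.single 1 1 := by
      ext j; fin_cases j <;> simp
    conv_rhs => rw [e]
    rw [map_add, map_smul, map_smul, dotp_add_right, dotp_smul_right, dotp_smul_right]
    simp [dotp, Fin.sum_univ_two, T]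
    ring
  refine ⟨U.image T, ?_, ?_⟩
  · intro y hy
    obtain ⟨u, hu, rfl⟩ := Finset.mem_image.1 hy
    intro j
    refine (hU u hu).dotp (hφ _ ?_)
    intro i
    by_cases h : i = j
    · exact ⟨1, by subst h; simp⟩
    · exact ⟨0, by simp [h]⟩
  · rw [Finset.coe_image]
    apply Set.Subset.antisymm
    · intro x hx
      apply bipolar (convex_convexHull ℝ _)
        ((U.finite_toSet.image T).isCompact_convexHull ℝ).isClosed
      · rw [← LinearMap.image_convexHull, ← hdU]
        exact ⟨0, fun y _ => by rw [dotp_zero_left]; norm_num, map_zero T⟩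
      · intro y hy
        rw [dotp_comm]
        apply hx
        change φ y ∈ P
        apply bipolar (lp_convex hP.1) (lp_compact hP.1).isClosed (interior_subset hP.2.1)
        intro u hu
        rw [hdU] at hu
        rw [dotp_comm]
        refine dual_convexHull _ ?_ u hu
        intro u' hu'
        rw [dotp_comm, ← hT, dotp_comm]
        exact hy _ (subset_convexHull ℝ _ (Set.mem_image_of_mem T hu'))
    · apply convexHull_min _ (dual_convex _)
      rintro _ ⟨u, hu, rfl⟩ y hy
      rw [hT]
      have : u ∈ dualPolytope P := by rw [hdU]; exact subset_convexHull ℝ _ hu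
      exact this _ hy

lemma ext_preimage {d : ℕ} {P : Set (Fin d → ℝ)} (φ : (Fin 2 → ℝ) →ₗ[ℝ] (Fin d → ℝ))
    (hinj : Function.Injective φ) {x : Fin 2 → ℝ} (hx : φ x ∈ Set.extremePoints ℝ P) :
    x ∈ Set.extremePoints ℝ (φ ⁻¹' P) := by
  refine ⟨hx.1, ?_⟩
  rintro a ha b hb ⟨s, t, hs, ht, hst, h⟩
  apply hinj
  refine hx.2 ha hb ⟨s, t, hs, ht, hst, ?_⟩
  rw [← h, map_add, map_smul, map_smul]

lemma ext_corner {d : ℕ} {P : Set (Fin d → ℝ)} (φ : (Fin 2 → ℝ) →ₗ[ℝ] (Fin d → ℝ))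
    (hinj : Function.Injective φ) {p q r : Fin d → ℝ} {a b : ℝ} {u1 u2 : Fin d → ℝ}
    (h : Corner P p q r a b u1 u2) (hspan : ∀ x, ∃ α β : ℝ, φ x = α • p + β • q)
    {x : Fin 2 → ℝ} (hx : φ x = r) :
    x ∈ Set.extremePoints ℝ (φ ⁻¹' P) := by
  obtain ⟨h1, h2, h3, h4, h5, h6, h7, h8, h9, h10, h11, h12, h13⟩ := h
  refine ⟨by rw [Set.mem_preimage, hx]; exact h5, ?_⟩
  rintro y hy z hz ⟨s, t, hs, ht, hst, he⟩
  apply hinj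
  have he' : s • φ y + t • φ z = r := by rw [← hx, ← he, map_add, map_smul, map_smul]
  have k : ∀ u ∈ FN P, dotp u r = 1 → dotp u (φ y) = 1 := by
    intro u hu hr
    rw [← he', dotp_add_right, dotp_smul_right, dotp_smul_right] at hr
    have l1 := FN_le hu hy
    have l2 := FN_le hu hz
    nlinarith
  have k1 := k u1 h6 h9
  have k2 := k u2 h7 h10
  obtain ⟨α, β, hαβ⟩ := hspan y
  rw [hαβ, dotp_add_right, dotp_smul_right, dotp_smul_right] at k1 k2
  rw [h3, dotp_add_right, dotp_smul_right, dotp_smul_right] at h9 h10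
  rw [h8] at k1 h9
  rw [h11] at k2 h10
  rw [hx, h3, hαβ]
  have e1 : (α - a) + (β - b) * dotp u1 q = 0 := by linarith
  have e2 : (α - a) * dotp u2 p + (β - b) = 0 := by linarith
  have e3 : α = a := by
    have : (α - a) * (1 - dotp u1 q * dotp u2 p) = 0 := by
      linear_combination e1 - dotp u1 q * e2
    rw [h12] at this
    linarith
  have e4 : β = b := by
    rw [e3] at e2
    linarith
  rw [e3, e4]

/-- for pairwise distinct vertices `v, w, w'` of a simplicial reflexive polytope
with `w ≠ -v ≠ w'`, `v ≁ w`, `v ≁ w'`, the span `L` of `{v,w,w'}` is `2`-dimensional and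
`P ∩ L` is a reflexive polygon (w.r.t. the lattice `ℤ^d ∩ L`) with at least five vertices. -/
theorem stmt6 {d : ℕ} (P : Set (Fin d → ℝ)) (hP : IsReflexive P) (hs : IsSimplicial P)
    (v w w' : Fin d → ℝ)
    (hv : v ∈ Set.extremePoints ℝ P) (hw : w ∈ Set.extremePoints ℝ P)
    (hw' : w' ∈ Set.extremePoints ℝ P)
    (hvw : v ≠ w) (hvw' : v ≠ w') (hww' : w ≠ w')
    (h1 : w ≠ -v) (h2 : w' ≠ -v)
    (h3 : ¬ ∃ F, IsFacet P F ∧ v ∈ F ∧ w ∈ F)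
    (h4 : ¬ ∃ F, IsFacet P F ∧ v ∈ F ∧ w' ∈ F) :
    Module.finrank ℝ (Submodule.span ℝ ({v, w, w'} : Set (Fin d → ℝ))) = 2 ∧
    ∀ φ : (Fin 2 → ℝ) →ₗ[ℝ] (Fin d → ℝ),
      Function.Injective φ →
      Set.range φ = (Submodule.span ℝ ({v, w, w'} : Set (Fin d → ℝ)) : Set (Fin d → ℝ)) →
      φ '' {x | IsLP x} =
        {y ∈ (Submodule.span ℝ ({v, w, w'} : Set (Fin d → ℝ)) : Set (Fin d → ℝ)) | IsLP y} →
      IsReflexive (φ ⁻¹' (P ∩ (Submodule.span ℝ ({v, w, w'} : Set (Fin d → ℝ)) : Set (Fin d → ℝ)))) ∧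
      5 ≤ (Set.extremePoints ℝ
        (φ ⁻¹' (P ∩ (Submodule.span ℝ ({v, w, w'} : Set (Fin d → ℝ)) : Set (Fin d → ℝ))))).ncard := by
  classical
  have hd : 0 < d := by
    rcases Nat.eq_zero_or_pos d with h | h
    · subst h
      exact absurd (Subsingleton.elim v w) hvw
    · exact h
  have hna : NA P v w := fun u hu a b =>
    h3 ⟨_, FN_facet hd hP hu, ⟨hv.1, a⟩, ⟨hw.1, b⟩⟩
  have hna' : NA P v w' := fun u hu a b =>
    h4 ⟨_, FN_facet hd hP hu, ⟨hv.1, a⟩, ⟨hw'.1, b⟩⟩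
  have hv0 := ext_ne_zero hP hv hw.1 hvw
  have hw0 := ext_ne_zero hP hw hv.1 hvw.symm
  have hw'0 := ext_ne_zero hP hw' hv.1 hvw'.symm
  have hvl := lp_extreme hP.1 hv
  have hwl := lp_extreme hP.1 hw
  have hwl' := lp_extreme hP.1 hw'
  have hs1 : v + w ≠ 0 := fun h => h1 (by rw [eq_neg_iff_add_eq_zero, add_comm]; exact h)
  have hs2 : v + w' ≠ 0 := fun h => h2 (by rw [eq_neg_iff_add_eq_zero, add_comm]; exact h)
  obtain ⟨c, hc, hrel⟩ : ∃ c : ℝ, 0 < c ∧ w' = (-c) • v - w := by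
    rcases relation hd hP hs hv hw hw' hv0 hw0 hw'0 hww' hs1 hs2 hna hna' with h | h
    · exact ⟨1, one_pos, by rw [← h]; abel⟩
    · exact ⟨2, two_pos, by rw [← h]; abel⟩
  have hind := indep hP hv.1 hw.1 hvl hwl hv0 hw0 hna hs1
  have huniq : ∀ a b a' b' : ℝ, a • v + b • w = a' • v + b' • w → a = a' ∧ b = b' := by
    intro a b a' b' h
    have := LinearIndependent.pair_iff.1 hind (a - a') (b - b') (by
      have : (a - a') • v + (b - b') • w = (a • v + b • w) - (a' • v + b' • w) := by module
      rw [this, h, sub_self])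
    exact ⟨by linarith [this.1], by linarith [this.2]⟩
  have hspan : Submodule.span ℝ ({v, w, w'} : Set (Fin d → ℝ)) = Submodule.span ℝ {v, w} := by
    apply le_antisymm
    · rw [Submodule.span_le]
      rintro x (rfl | rfl | rfl)
      · exact Submodule.subset_span (by simp)
      · exact Submodule.subset_span (by simp)
      · rw [hrel]
        exact Submodule.sub_mem _ (Submodule.smul_mem _ _ (Submodule.subset_span (by simp)))
          (Submodule.subset_span (by simp))
    · apply Submodule.span_mono
      rintro x (rfl | rfl) <;> simp
  have hs3 : w + w' ≠ 0 := by
    rw [hrel]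
    intro h
    have : (-c) • v = 0 := by rw [← h]; abel
    rcases smul_eq_zero.1 this with h | h
    · linarith
    · exact hv0 h
  constructor
  · rw [hspan]
    have := finrank_span_eq_card hind
    have hr : Set.range ![v, w] = {v, w} := by
      ext x; simp [eq_comm]; tauto
    rw [hr] at this
    simpa using this
  intro φ hinj hrange hlat
  have hL : φ ⁻¹' (P ∩ (Submodule.span ℝ ({v, w, w'} : Set (Fin d → ℝ)) : Set (Fin d → ℝ)))
      = φ ⁻¹' P := by
    ext x
    constructor
    · exact fun h => h.1
    · exact fun h => ⟨h, by rw [← hrange]; exact ⟨x, rfl⟩⟩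
  rw [hL]
  have hcoord : ∀ x, ∃ α β : ℝ, φ x = α • v + β • w := by
    intro x
    have : φ x ∈ (Submodule.span ℝ ({v, w, w'} : Set (Fin d → ℝ)) : Set (Fin d → ℝ)) := by
      rw [← hrange]; exact ⟨x, rfl⟩
    rw [hspan] at this
    obtain ⟨α, β, h⟩ := Submodule.mem_span_pair.1 this
    exact ⟨α, β, h.symm⟩
  have hcoord' : ∀ x, ∃ α β : ℝ, φ x = α • v + β • w' := by
    intro x
    obtain ⟨α, β, h⟩ := hcoord x
    exact ⟨α - c * β, -β, by rw [h, hrel]; module⟩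
  have hlift : ∀ y : Fin d → ℝ, IsLP y → (∃ α β : ℝ, y = α • v + β • w) →
      ∃ x, IsLP x ∧ φ x = y := by
    rintro y hy ⟨α, β, h⟩
    have : y ∈ φ '' {x | IsLP x} := by
      rw [hlat]
      refine ⟨?_, hy⟩
      rw [hspan]
      exact Submodule.mem_span_pair.2 ⟨α, β, h.symm⟩
    exact this
  have hφl : ∀ x, IsLP x → IsLP (φ x) := by
    intro x hx
    have : φ x ∈ φ '' {x | IsLP x} := ⟨x, hx, rfl⟩
    rw [hlat] at this
    exact this.2
  obtain ⟨r1, a1, b1, u1, u1', C1⟩ := corner hP hv.1 hw.1 hvl hwl hv0 hw0 hs1 hna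
  obtain ⟨r2, a2, b2, u2, u2', C2⟩ := corner hP hv.1 hw'.1 hvl hwl' hv0 hw'0 hs2 hna'
  obtain ⟨r3, a3, b3, hr3, hr3l, hr3P, S3⟩ := sector hP hw.1 hw'.1 hwl hwl' hw0 hw'0 hs3
  have C1' := C1
  have C2' := C2
  obtain ⟨ha1, hb1, hr1, hr1l, hr1P, -, -, -, -, -, -, -, S1⟩ := C1'
  obtain ⟨ha2, hb2, hr2, hr2l, hr2P, -, -, -, -, -, -, -, S2⟩ := C2'
  obtain ⟨xv, lxv, exv⟩ := hlift v hvl ⟨1, 0, by simp⟩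
  obtain ⟨xw, lxw, exw⟩ := hlift w hwl ⟨0, 1, by simp⟩
  obtain ⟨xw', lxw', exw'⟩ := hlift w' hwl' ⟨-c, -1, by rw [hrel]; module⟩
  obtain ⟨x1, lx1, ex1⟩ := hlift r1 hr1l ⟨a1, b1, hr1⟩
  obtain ⟨x2, lx2, ex2⟩ := hlift r2 hr2l ⟨a2 - c * b2, -b2, by rw [hr2, hrel]; module⟩
  obtain ⟨x3, lx3, ex3⟩ := hlift r3 hr3l ⟨- (c * b3), a3 - b3, by rw [hr3, hrel]; module⟩
  set S : Finset (Fin 2 → ℝ) := {xv, xw, xw', x1, x2, x3} with hSdef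
  have hQconv : Convex ℝ (φ ⁻¹' P) := (lp_convex hP.1).linear_preimage φ
  have hLP : IsLatticePolytope (φ ⁻¹' P) := by
    refine ⟨S, ?_, ?_⟩
    · intro x hx
      simp only [hSdef, Finset.mem_insert, Finset.mem_singleton] at hx
      rcases hx with rfl | rfl | rfl | rfl | rfl | rfl <;> assumption
    apply Set.Subset.antisymm
    · intro x hx
      set K : Set (Fin d → ℝ) := φ '' convexHull ℝ (S : Set (Fin 2 → ℝ)) with hK
      have hKc : Convex ℝ K := (convex_convexHull ℝ _).linear_image φ
      have hin : ∀ y ∈ S, φ y ∈ K := fun y hy => ⟨y, subset_convexHull ℝ _ hy, rfl⟩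
      have kv : v ∈ K := by rw [← exv]; exact hin _ (by simp [hSdef])
      have kw : w ∈ K := by rw [← exw]; exact hin _ (by simp [hSdef])
      have kw' : w' ∈ K := by rw [← exw']; exact hin _ (by simp [hSdef])
      have k1 : r1 ∈ K := by rw [← ex1]; exact hin _ (by simp [hSdef])
      have k2 : r2 ∈ K := by rw [← ex2]; exact hin _ (by simp [hSdef])
      have k3 : r3 ∈ K := by rw [← ex3]; exact hin _ (by simp [hSdef])
      have k0 : (0 : Fin d → ℝ) ∈ K := by
        have hm : (1 / 2 : ℝ) • w + (1 / 2 : ℝ) • w' ∈ K :=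
          hKc kw kw' (by norm_num) (by norm_num) (by norm_num)
        have := hKc kv hm (a := c / (c + 2)) (b := 2 / (c + 2)) (by positivity) (by positivity)
          (by field_simp)
        have e : (c / (c + 2)) • v + (2 / (c + 2)) • ((1 / 2 : ℝ) • w + (1 / 2 : ℝ) • w') = 0 := by
          rw [hrel]
          have : (2 / (c + 2)) • ((1 / 2 : ℝ) • w + (1 / 2 : ℝ) • ((-c) • v - w)) =
            (-(c / (c + 2))) • v := by
            have e1 : (1 / 2 : ℝ) • w + (1 / 2 : ℝ) • ((-c) • v - w) = (-(c / 2)) • v := by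
              module
            rw [e1, smul_smul]
            congr 1
            field_simp
          rw [this]
          module
        rwa [e] at this
      have hxP : φ x ∈ P := hx
      have hxK : φ x ∈ K := by
        obtain ⟨α, β, hαβ⟩ := hcoord x
        have e2 : α • v + β • w = (α - c * β) • v + (-β) • w' := by rw [hrel]; module
        have e3 : α • v + β • w = (β - α / c) • w + (-(α / c)) • w' := by
          rw [hrel, smul_sub, smul_smul]
          have : -(α / c) * -c = α := by field_simp
          rw [this]
          module
        have q2 : 0 ≤ α - c * β → β ≤ 0 → φ x ∈ K := by
          intro i j
          rw [hαβ, e2] at hxP ⊢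
          exact S2 K hKc k0 kv k2 kw' _ _ i (by linarith) hxP
        have q3 : α ≤ 0 → α ≤ β * c → φ x ∈ K := by
          intro i j
          rw [hαβ, e3] at hxP ⊢
          have j1 : α / c ≤ β := by rwa [div_le_iff₀ hc]
          have j2 : α / c ≤ 0 := div_nonpos_of_nonpos_of_nonneg i hc.le
          exact S3 K hKc k0 kw k3 kw' _ _ (by linarith) (by linarith) hxP
        rcases le_total 0 β with hβ | hβ
        · rcases le_total 0 α with hα | hα
          · rw [hαβ] at hxP ⊢
            exact S1 K hKc k0 kv k1 kw _ _ hα hβ hxP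
          · exact q3 hα (by nlinarith)
        · rcases le_total (c * β) α with hα | hα
          · exact q2 (by linarith) hβ
          · exact q3 (by nlinarith) (by linarith)
      obtain ⟨y, hy, hyx⟩ := hxK
      rw [← hinj hyx]
      exact hy
    · apply convexHull_min _ hQconv
      intro x hx
      rw [Set.mem_preimage]
      simp only [hSdef, Finset.coe_insert, Finset.coe_singleton, Set.mem_insert_iff,
        Set.mem_singleton_iff] at hx
      rcases hx with rfl | rfl | rfl | rfl | rfl | rfl
      · rw [exv]; exact hv.1
      · rw [exw]; exact hw.1
      · rw [exw']; exact hw'.1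
      · rw [ex1]; exact hr1P
      · rw [ex2]; exact hr2P
      · rw [ex3]; exact hr3P
  refine ⟨⟨hLP, ?_, dual_section hP φ hφl⟩, ?_⟩
  · have hcont : Continuous φ := φ.continuous_of_finiteDimensional
    apply preimage_interior_subset_interior_preimage hcont
    rw [Set.mem_preimage, map_zero]
    exact hP.2.1
  · set E : Finset (Fin 2 → ℝ) := {xv, xw, xw', x1, x2} with hE
    have hsub : (E : Set (Fin 2 → ℝ)) ⊆ Set.extremePoints ℝ (φ ⁻¹' P) := by
      intro x hx
      simp only [hE, Finset.coe_insert, Finset.coe_singleton, Set.mem_insert_iff,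
        Set.mem_singleton_iff] at hx
      rcases hx with rfl | rfl | rfl | rfl | rfl
      · exact ext_preimage φ hinj (by rw [exv]; exact hv)
      · exact ext_preimage φ hinj (by rw [exw]; exact hw)
      · exact ext_preimage φ hinj (by rw [exw']; exact hw')
      · exact ext_corner φ hinj C1 hcoord ex1
      · exact ext_corner φ hinj C2 hcoord' ex2
    have hne : ∀ {x y : Fin 2 → ℝ} (a b a' b' : ℝ), φ x = a • v + b • w → φ y = a' • v + b' • w →
        (a = a' → b ≠ b') → x ≠ y := by
      rintro x y a b a' b' hx hy h rfl
      obtain ⟨i, j⟩ := huniq a b a' b' (hx.symm.trans hy)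
      exact h i j
    have fv : φ xv = (1 : ℝ) • v + (0 : ℝ) • w := by rw [exv]; module
    have fw : φ xw = (0 : ℝ) • v + (1 : ℝ) • w := by rw [exw]; module
    have fw' : φ xw' = (-c) • v + (-1 : ℝ) • w := by rw [exw', hrel]; module
    have f1 : φ x1 = a1 • v + b1 • w := by rw [ex1, hr1]
    have f2 : φ x2 = (a2 - c * b2) • v + (-b2) • w := by rw [ex2, hr2, hrel]; module
    have hcardE : E.card = 5 := by
      rw [hE]
      rw [Finset.card_insert_of_notMem, Finset.card_insert_of_notMem,
        Finset.card_insert_of_notMem, Finset.card_insert_of_notMem, Finset.card_singleton]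
      · rw [Finset.mem_singleton]
        exact hne _ _ _ _ f1 f2 (fun _ h => by linarith)
      · simp only [Finset.mem_insert, Finset.mem_singleton, not_or]
        refine ⟨hne _ _ _ _ fw' f1 (fun _ h => by linarith), hne _ _ _ _ fw' f2 (fun i h => ?_)⟩
        have hb : b2 = 1 := by linarith
        rw [hb] at i
        linarith
      · simp only [Finset.mem_insert, Finset.mem_singleton, not_or]
        exact ⟨hne _ _ _ _ fw fw' (fun _ h => by linarith),
          hne _ _ _ _ fw f1 (fun i h => by linarith), hne _ _ _ _ fw f2 (fun _ h => by linarith)⟩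
      · simp only [Finset.mem_insert, Finset.mem_singleton, not_or]
        exact ⟨hne _ _ _ _ fv fw (fun _ h => by linarith),
          hne _ _ _ _ fv fw' (fun _ h => by linarith),
          hne _ _ _ _ fv f1 (fun _ h => by linarith),
          hne _ _ _ _ fv f2 (fun _ h => by linarith)⟩
    rw [← hcardE, ← Set.ncard_coe_finset]
    exact Set.ncard_le_ncard hsub (lp_ext_finite hLP)
end
end

section
/- Let P ⊆ ℝ^d be a d-dimensional simplicial reflexive polytope and F a facet of P whose vertex set 𝒱(F) is a ℤ-basis of the lattice ℤ^d. Let v ∈ 𝒱(F) and suppose the neighboring vertex n(F,v) satisfies ⟨u_F, n(F,v)⟩ = 0. Then ⟨u_F^v, n(F,v)⟩ = −1. -/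
noncomputable section

/-- `F'` is the neighboring facet `N(F,w)`: a facet different from `F` containing all
vertices of `F` except `w`. -/
def NbrFacet {d : ℕ} (P F : Set (Fin d → ℝ)) (w : Fin d → ℝ) (F' : Set (Fin d → ℝ)) : Prop :=
  IsFacet P F' ∧ F' ≠ F ∧ Set.extremePoints ℝ F \ {w} ⊆ F'

/-- `v'` is the neighboring vertex `n(F,w)`: the vertex of the neighboring facet `N(F,w)`
not contained in `F`. -/
def NbrVertex {d : ℕ} (P F : Set (Fin d → ℝ)) (w v' : Fin d → ℝ) : Prop :=
  ∃ F', NbrFacet P F w F' ∧ v' ∈ Set.extremePoints ℝ F' ∧ v' ∉ F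

/-- The set `B` is a `ℤ`-basis of the lattice `ℤ^d`. -/
def IsZBasis {d : ℕ} (B : Set (Fin d → ℝ)) : Prop :=
  ∃ b : Fin d → (Fin d → ℝ), Function.Injective b ∧ Set.range b = B ∧
    (∀ i, IsLP (b i)) ∧ ∀ x : Fin d → ℝ, IsLP x → ∃ c : Fin d → ℤ, x = ∑ i, (c i : ℝ) • b i

theorem dotp_comb {d : ℕ} (x : Fin d → ℝ) (b : Fin d → Fin d → ℝ) (c : Fin d → ℝ) :
    dotp x (∑ i, c i • b i) = ∑ i, c i * dotp x (b i) := by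
  change x ⬝ᵥ (∑ i, c i • b i) = ∑ i, c i * (x ⬝ᵥ b i)
  rw [dotProduct_sum]
  simp

theorem dotp_lin {d : ℕ} (x y z : Fin d → ℝ) (a b : ℝ) :
    dotp (a • x + b • y) z = a * dotp x z + b * dotp y z := by
  change (a • x + b • y) ⬝ᵥ z = a * (x ⬝ᵥ z) + b * (y ⬝ᵥ z)
  simp [add_dotProduct]

theorem dotp_lin_right {d : ℕ} (x y z : Fin d → ℝ) (a b : ℝ) :
    dotp z (a • x + b • y) = a * dotp z x + b * dotp z y := by
  change z ⬝ᵥ (a • x + b • y) = a * (z ⬝ᵥ x) + b * (z ⬝ᵥ y)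
  simp [dotProduct_add]

theorem dotp_int {d : ℕ} (x y : Fin d → ℝ) (hx : IsLP x) (hy : IsLP y) :
    ∃ n : ℤ, dotp x y = n := by
  choose f hf using hx
  choose g hg using hy
  exact ⟨∑ i, f i * g i, by simp [dotp, hf, hg]⟩

theorem dotp_ext_s9 {d : ℕ} (b : Fin d → Fin d → ℝ)
    (hb : ∀ x : Fin d → ℝ, IsLP x → ∃ c : Fin d → ℤ, x = ∑ i, (c i : ℝ) • b i)
    (x y : Fin d → ℝ) (h : ∀ i, dotp x (b i) = dotp y (b i)) : x = y := by
  funext j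
  obtain ⟨c, hc⟩ := hb (Pi.single j 1) (by
    intro i
    by_cases hij : i = j
    · subst hij; exact ⟨1, by simp⟩
    · exact ⟨0, by simp [hij]⟩)
  have h1 : ∀ z : Fin d → ℝ, z j = dotp z (Pi.single j 1) := by
    intro z
    change z j = z ⬝ᵥ (Pi.single j 1)
    simp
  rw [h1 x, h1 y, hc, dotp_comb x b (fun i => (c i : ℝ)), dotp_comb y b (fun i => (c i : ℝ))]
  simp [h]

/-- if the vertex set of a facet `F` is a `ℤ`-basis of `ℤ^d`, `v ∈ 𝒱(F)`, and
the neighboring vertex `v' = n(F,v)` satisfies `⟨u_F, v'⟩ = 0`, then `⟨u_F^v, v'⟩ = -1`. -/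
theorem stmt9 {d : ℕ} (P : Set (Fin d → ℝ)) (hP : IsReflexive P) (hs : IsSimplicial P)
    (F : Set (Fin d → ℝ)) (u : Fin d → ℝ) (hF : IsFacetNormal P F u)
    (hbasis : IsZBasis (Set.extremePoints ℝ F))
    (v : Fin d → ℝ) (hv : v ∈ Set.extremePoints ℝ F)
    (uv : Fin d → ℝ) (huv1 : dotp uv v = 1)
    (huv0 : ∀ w ∈ Set.extremePoints ℝ F, w ≠ v → dotp uv w = 0)
    (v' : Fin d → ℝ) (hv' : NbrVertex P F v v')
    (h0 : dotp u v' = 0) :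
    dotp uv v' = -1 := by
  obtain ⟨⟨V, hV, rfl⟩, -, ⟨W, hW, hdual⟩⟩ := hP
  obtain ⟨-, hu1, hFeq, -⟩ := hF
  obtain ⟨b, hbinj, hbr, hbLP, hb⟩ := hbasis
  obtain ⟨F', ⟨⟨u', -, hu'1, hF'eq, -⟩, hne, hsub⟩, hv'ext, hv'F⟩ := hv'
  obtain ⟨i0, hi0⟩ : v ∈ Set.range b := by rw [hbr]; exact hv
  have hbe : ∀ i, b i ∈ Set.extremePoints ℝ F := fun i => by rw [← hbr]; exact ⟨i, rfl⟩
  have hbF : ∀ i, b i ∈ F := fun i => (hbe i).1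
  have hub : ∀ i, dotp u (b i) = 1 := fun i => by
    have := hbF i; rw [hFeq] at this; exact this.2
  have hbP : ∀ i, b i ∈ convexHull ℝ (V : Set (Fin d → ℝ)) := fun i => by
    have := hbF i; rw [hFeq] at this; exact this.1
  have hbv : ∀ i, i ≠ i0 → b i ≠ v := fun i hi h => hi (hbinj (h.trans hi0.symm))
  have hbF' : ∀ i, i ≠ i0 → b i ∈ F' := fun i hi => hsub ⟨hbe i, hbv i hi⟩
  have hF'sub : ∀ y ∈ F', y ∈ convexHull ℝ (V : Set (Fin d → ℝ)) ∧ dotp u' y = 1 := by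
    intro y hy; rw [hF'eq] at hy; exact hy
  have hv'P := hF'sub v' hv'ext.1
  have tight : ∀ p q s t : ℝ, 0 < s → 0 < t → s + t = 1 → p ≤ 1 → q ≤ 1 →
      s * p + t * q = 1 → p = 1 := by
    intro p q s t hs ht hst hp hq h
    have h1 : s * (1 - p) = 0 := by
      nlinarith [mul_nonneg hs.le (sub_nonneg.2 hp), mul_nonneg ht.le (sub_nonneg.2 hq)]
    rcases mul_eq_zero.1 h1 with h2 | h2 <;> linarith
  have hv'LP : IsLP v' := by
    apply hV
    have : v' ∈ Set.extremePoints ℝ (convexHull ℝ (V : Set (Fin d → ℝ))) := by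
      refine ⟨hv'P.1, ?_⟩
      intro x hx y hy hxy
      obtain ⟨s, t, hs, ht, hst, hc⟩ := id hxy
      have e := hv'P.2
      rw [← hc, dotp_lin_right] at e
      have ex := tight _ _ s t hs ht hst (hu'1 x hx) (hu'1 y hy) e
      have ey := tight _ _ t s ht hs (by linarith) (hu'1 y hy) (hu'1 x hx) (by linarith)
      exact hv'ext.2 (by rw [hF'eq]; exact ⟨hx, ex⟩) (by rw [hF'eq]; exact ⟨hy, ey⟩) hxy
    exact_mod_cast extremePoints_convexHull_subset this
  obtain ⟨c, hc⟩ := hb v' hv'LP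
  have key : ∀ x : Fin d → ℝ, dotp x v' = ∑ i, (c i : ℝ) * dotp x (b i) := fun x => by
    rw [hc]; exact dotp_comb x b (fun i => (c i : ℝ))
  have hsum : ∑ i, (c i : ℝ) = 0 := by
    rw [← h0, key u]; simp [hub]
  have huvc : dotp uv v' = c i0 := by
    rw [key uv, Finset.sum_eq_single i0]
    · rw [hi0, huv1, mul_one]
    · intro i _ hi
      rw [huv0 _ (hbe i) (hbv i hi), mul_zero]
    · simp
  have key2 : ∀ x : Fin d → ℝ, (∀ i, i ≠ i0 → dotp x (b i) = 1) →
      dotp x v' = (c i0 : ℝ) * (dotp x v - 1) := by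
    intro x hx
    have : dotp x v' - ∑ i, (c i : ℝ) = (c i0 : ℝ) * (dotp x v - 1) := by
      rw [key x, ← Finset.sum_sub_distrib, Finset.sum_eq_single i0]
      · rw [hi0]; ring
      · intro i _ hi
        rw [hx i hi]; ring
      · simp
    rw [hsum] at this
    linarith
  have hu'b : ∀ i, i ≠ i0 → dotp u' (b i) = 1 := fun i hi => (hF'sub _ (hbF' i hi)).2
  have hk := key2 u' hu'b
  rw [hv'P.2] at hk
  have hc0 : (c i0 : ℝ) ≠ 0 := by
    intro h; rw [h] at hk; simp at hk
  have hu'LP : IsLP u' := by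
    apply hW
    have : u' ∈ Set.extremePoints ℝ (convexHull ℝ (W : Set (Fin d → ℝ))) := by
      rw [← hdual]
      refine ⟨hu'1, ?_⟩
      intro x hx y hy hxy
      obtain ⟨s, t, hs, ht, hst, hc⟩ := hxy
      have ex : ∀ z ∈ F', dotp x z = 1 := by
        intro z hz
        have e := (hF'sub z hz).2
        rw [← hc, dotp_lin] at e
        exact tight _ _ s t hs ht hst (hx z (hF'sub z hz).1) (hy z (hF'sub z hz).1) e
      have exb : ∀ i, i ≠ i0 → dotp x (b i) = 1 := fun i hi => ex _ (hbF' i hi)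
      apply dotp_ext_s9 b hb
      intro i
      by_cases hi : i = i0
      · have h2 := key2 x exb
        rw [ex v' hv'ext.1, hk] at h2
        have := mul_left_cancel₀ hc0 h2
        rw [hi, hi0]; linarith
      · rw [exb i hi, hu'b i hi]
    exact_mod_cast extremePoints_convexHull_subset this
  obtain ⟨n, hn⟩ := dotp_int u' v hu'LP (hi0 ▸ hbLP i0)
  have hvP : dotp u' v ≤ 1 := hu'1 v (hi0 ▸ hbP i0)
  rw [hn] at hk hvP
  have hk' : 1 = c i0 * (n - 1) := by exact_mod_cast hk
  have hn1 : n ≤ 1 := by exact_mod_cast hvP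
  rw [huvc]
  rcases Int.mul_eq_one_iff_eq_one_or_neg_one.1 hk'.symm with h | h
  · omega
  · rw [h.1]; norm_num
end
end
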